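/- arXiv:2604.10457 — 2 statements merged into one kernel-verified Lean document; each statement's English description precedes it below -/
import Mathlib

section
/- There exist constants C > 0 and n₀ such that the following holds for all n ≥ n₀. Let k ≥ 3, δ ∈ (0,1] with δ² n^{0.1} ≥ C log n, let x ∈ {±1}^n be the planted assignment, and let x̂ ∈ {±1}^n be a fixed estimate with |{j ∈ [n] : x̂_j ≠ x_j}| ≤ n/(4k). Draw an independent clean-up sample in the Bernoulli model with inclusion probability p' := m'/binom(n,k), where m' := ⌈n^{1.1}⌉: each k-subset e of [n] is included independently with probability p', and each included e carries the label y_e = ξ_e · ∏_{j∈e} x_j, where the ξ_e ∈ {±1} are independent with Pr[ξ_e = 1] = (1+δ)/2. For each i ∈ [n], set T_i := Σ over included e containing i of y_e · ∏_{j∈e∖{i}} x̂_j, and x̃_i := sgn(T_i) (ties broken arbitrarily). Then Pr[x̃_i = x_i for all i ∈ [n]] ≥ 1 − n^{−10}. -/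
open Finset

/-- The index set of `k`-element subsets of `[n]`, used to index the coordinates of an
observation `z ∈ {0,±1}^{binom([n],k)}`. -/
abbrev KSet (n k : ℕ) := {α : Finset (Fin n) // α.card = k}

/-- Coordinate weights under the null model `Q`: value `0` with probability `1−p`,
values `+1` and `−1` each with probability `p/2`. -/
noncomputable def qWeight (p : ℝ) : Fin 3 → ℝ := ![1 - p, p / 2, p / 2]

/-- Coordinate weights under the planted model `P_x`: the coordinate is `0` with probability
`1−p`, equals `x_α` with probability `p(1+δ)/2` and `−x_α` with probability `p(1−δ)/2`. -/
noncomputable def pWeight (p δ : ℝ) : Fin 3 → ℝ := ![1 - p, p * (1 + δ) / 2, p * (1 - δ) / 2]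

/-- Realized coordinate values under the null model. -/
noncomputable def qVal : Fin 3 → ℝ := ![0, 1, -1]

/-- Realized coordinate values under the planted model: `0`, `x_α`, `−x_α`,
where `x_α = ∏_{i∈α} x_i`. -/
noncomputable def pVal {n k : ℕ} (x : Fin n → ℝ) (α : KSet n k) : Fin 3 → ℝ :=
  ![0, ∏ i ∈ α.1, x i, -∏ i ∈ α.1, x i]

/-- Expectation of a statistic `F` of the observation `z` under the null (Bernoulli) model
`Q`, in which the coordinates `z(α)` are independent with law given by `qWeight p`. -/
noncomputable def expQ (n k : ℕ) (p : ℝ) (F : (KSet n k → ℝ) → ℝ) : ℝ :=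
  ∑ ω : KSet n k → Fin 3, (∏ α : KSet n k, qWeight p (ω α)) * F (fun α => qVal (ω α))

/-- Expectation of a statistic `F` of the observation `z` under the planted Bernoulli model
`P_x`, in which the coordinates `z(α) = b_α x_α ξ_α` are independent. -/
noncomputable def expP (n k : ℕ) (p δ : ℝ) (x : Fin n → ℝ) (F : (KSet n k → ℝ) → ℝ) : ℝ :=
  ∑ ω : KSet n k → Fin 3, (∏ α : KSet n k, pWeight p δ (ω α)) * F (fun α => pVal x α (ω α))

/-- Sign value of an outcome state: `0` if the constraint is not included, `ξ = ±1` if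
included with noise sign `ξ`. -/
noncomputable def sgn3 : Fin 3 → ℝ := ![0, 1, -1]

/-- The clean-up vote `T_i = Σ_{included e ∋ i} y_e ∏_{j ∈ e∖{i}} x̂_j`, where
`y_e = ξ_e ∏_{j∈e} x_j`, as a function of the outcome `ω` of the clean-up sample. -/
noncomputable def Tclean (n k : ℕ) (x xh : Fin n → ℝ) (ω : KSet n k → Fin 3) (i : Fin n) : ℝ :=
  ∑ α : KSet n k,
    if i ∈ α.1 then sgn3 (ω α) * (∏ j ∈ α.1, x j) * ∏ j ∈ α.1.erase i, xh j else 0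

/-!
Write `s_e ∈ {0, ±1}` for the outcome sign of the constraint `e`. Then `x_i T_i` is the sum of
`c_e s_e` over `e ∋ i`, with `c_e = ∏_{j ∈ e∖{i}} x_j x̂_j = ±1`. At most a `1/(4k)` fraction of the
coordinates of `x̂` is wrong and `e∖{i}` has fewer than `k` elements, so at most a quarter of the
`c_e` are `-1`, and the mean of `x_i T_i` is at least `pδ/2` times the number `k binom(n,k) / n` of
constraints through `i`. Chernoff's bound at parameter `δ/4` shows that `x_i T_i ≤ 0` has
probability at most `exp(-p binom(n,k) k δ² / (16 n))`, and a union bound over `i` finishes.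
-/

lemma cosh_sub_one_le_sq {t : ℝ} (ht : |t| ≤ 1) : Real.cosh t - 1 ≤ t ^ 2 := by
  have hpos := le_of_abs_le (Real.abs_exp_sub_one_sub_id_le ht)
  have hneg := le_of_abs_le (Real.abs_exp_sub_one_sub_id_le (x := -t) (by rwa [abs_neg]))
  rw [Real.cosh_eq]
  linarith [neg_sq t]

lemma cosh_mul_of_abs_eq_one {c : ℝ} (hc : |c| = 1) (t : ℝ) :
    Real.cosh (t * c) = Real.cosh t := by
  rcases eq_or_eq_neg_of_abs_eq hc with rfl | rfl <;> simp

lemma sinh_mul_of_abs_eq_one {c : ℝ} (hc : |c| = 1) (t : ℝ) :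
    Real.sinh (t * c) = c * Real.sinh t := by
  rcases eq_or_eq_neg_of_abs_eq hc with rfl | rfl <;> simp

lemma mul_exp_neg_le_rpow_neg {a A t : ℝ} (ha : 0 < a) (h : (A + 1) * Real.log a ≤ t) :
    a * Real.exp (-t) ≤ a ^ (-A) := by
  calc a * Real.exp (-t) = Real.exp (Real.log a - t) := by
        rw [sub_eq_add_neg, Real.exp_add, Real.exp_log ha]
    _ ≤ Real.exp (Real.log a * -A) := Real.exp_le_exp.2 (by linarith)
    _ = a ^ (-A) := (Real.rpow_def_of_pos ha _).symm

lemma mul_nonpos_of_sign_ne {sg : ℝ → ℝ} (hpos : ∀ t, 0 < t → sg t = 1)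
    (hneg : ∀ t, t < 0 → sg t = -1) {a t : ℝ} (ha : |a| = 1) (h : sg t ≠ a) : a * t ≤ 0 := by
  by_contra! hlt
  rcases eq_or_eq_neg_of_abs_eq ha with rfl | rfl
  · exact h (hpos t (by linarith))
  · exact h (hneg t (by linarith))

lemma one_sub_sum_one_sub_le_prod {ι : Type*} (s : Finset ι) {u : ι → ℝ}
    (hu : ∀ j ∈ s, |u j| ≤ 1) :
    1 - ∑ j ∈ s, (1 - u j) ≤ ∏ j ∈ s, u j := by
  classical
  induction s using Finset.induction_on with
  | empty => simp
  | insert a s ha ih =>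
    have hprod : ∏ j ∈ s, u j ≤ 1 :=
      calc ∏ j ∈ s, u j ≤ ∏ j ∈ s, |u j| := (le_abs_self _).trans_eq (abs_prod s u)
        _ ≤ 1 := prod_le_one (fun _ _ => abs_nonneg _) fun j hj => hu j (mem_insert_of_mem hj)
    rw [sum_insert ha, prod_insert ha]
    linarith [ih fun j hj => hu j (mem_insert_of_mem hj),
      mul_nonneg (sub_nonneg.2 (le_of_abs_le (hu a (mem_insert_self a s)))) (sub_nonneg.2 hprod)]

lemma sum_one_sub_mul_eq_two_mul_card {ι : Type*} [Fintype ι] {x y : ι → ℝ}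
    (hx : ∀ j, x j = 1 ∨ x j = -1) (hy : ∀ j, y j = 1 ∨ y j = -1) :
    ∑ j, (1 - x j * y j) = 2 * Nat.card {j // y j ≠ x j} := by
  classical
  have hterm (j : ι) : 1 - x j * y j = if y j ≠ x j then 2 else 0 := by
    rcases hx j with h | h <;> rcases hy j with h' | h' <;> rw [h, h'] <;> norm_num
  simp_rw [hterm]
  rw [← sum_filter, sum_const, nsmul_eq_mul, mul_comm, Nat.card_eq_fintype_card,
    Fintype.card_subtype]

section OutcomeExp

variable {ι : Type*} [Fintype ι] [DecidableEq ι] {p δ : ℝ}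

/-- Expectation of `F ω` when the outcomes `ω α : Fin 3` are independent with law `pWeight p δ`.
Probabilities are encoded as expectations of `0`-`1` valued functions. -/
noncomputable def outcomeExp (p δ : ℝ) (F : (ι → Fin 3) → ℝ) : ℝ :=
  ∑ ω : ι → Fin 3, (∏ α, pWeight p δ (ω α)) * F ω

lemma sum_pWeight (p δ : ℝ) : ∑ b, pWeight p δ b = 1 := by
  simp only [pWeight, Fin.sum_univ_three, Matrix.cons_val]
  ring

lemma pWeight_nonneg (hp0 : 0 ≤ p) (hp1 : p ≤ 1) (hδ : |δ| ≤ 1) (b : Fin 3) :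
    0 ≤ pWeight p δ b := by
  have hplus : 0 ≤ p * (1 + δ) := mul_nonneg hp0 (by linarith [neg_le_of_abs_le hδ])
  have hminus : 0 ≤ p * (1 - δ) := mul_nonneg hp0 (by linarith [le_of_abs_le hδ])
  fin_cases b
  exacts [sub_nonneg.2 hp1, div_nonneg hplus zero_le_two, div_nonneg hminus zero_le_two]

lemma outcomeExp_prod (S : Finset ι) (g : ι → Fin 3 → ℝ) :
    outcomeExp p δ (fun ω => ∏ α ∈ S, g α (ω α)) = ∏ α ∈ S, ∑ b, pWeight p δ b * g α b := by
  calc outcomeExp p δ (fun ω => ∏ α ∈ S, g α (ω α))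
      = ∑ ω : ι → Fin 3, ∏ α, pWeight p δ (ω α) * if α ∈ S then g α (ω α) else 1 := by
        simp only [outcomeExp, prod_mul_distrib, Fintype.prod_ite_mem]
    _ = ∏ α, ∑ b, pWeight p δ b * if α ∈ S then g α b else 1 := by
        rw [prod_univ_sum, Fintype.piFinset_univ]
    _ = ∏ α, if α ∈ S then ∑ b, pWeight p δ b * g α b else 1 := by
        refine prod_congr rfl fun α _ => ?_
        split_ifs
        · rfl
        · simp only [mul_one, sum_pWeight]
    _ = ∏ α ∈ S, ∑ b, pWeight p δ b * g α b := Fintype.prod_ite_mem S _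

lemma outcomeExp_one : outcomeExp p δ (fun _ : ι → Fin 3 => 1) = 1 := by
  simpa only [prod_empty] using outcomeExp_prod (p := p) (δ := δ) (∅ : Finset ι) fun _ _ => 1

lemma outcomeExp_sub (F G : (ι → Fin 3) → ℝ) :
    outcomeExp p δ (fun ω => F ω - G ω) = outcomeExp p δ F - outcomeExp p δ G := by
  simp only [outcomeExp, mul_sub, sum_sub_distrib]

lemma outcomeExp_sum {κ : Type*} (s : Finset κ) (F : κ → (ι → Fin 3) → ℝ) :
    outcomeExp p δ (fun ω => ∑ i ∈ s, F i ω) = ∑ i ∈ s, outcomeExp p δ (F i) := by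
  simp only [outcomeExp, mul_sum]
  exact sum_comm

lemma outcomeExp_mono (hp0 : 0 ≤ p) (hp1 : p ≤ 1) (hδ : |δ| ≤ 1) {F G : (ι → Fin 3) → ℝ}
    (h : ∀ ω, F ω ≤ G ω) : outcomeExp p δ F ≤ outcomeExp p δ G :=
  sum_le_sum fun ω _ =>
    mul_le_mul_of_nonneg_left (h ω) (prod_nonneg fun _ _ => pWeight_nonneg hp0 hp1 hδ _)

lemma one_sub_sum_le_outcomeExp_forall (hp0 : 0 ≤ p) (hp1 : p ≤ 1) (hδ : |δ| ≤ 1)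
    {κ : Type*} [Fintype κ] {P : κ → (ι → Fin 3) → Prop} [∀ ω, Decidable (∀ i, P i ω)]
    {g : κ → (ι → Fin 3) → ℝ} (hg : ∀ i ω, 0 ≤ g i ω) (hP : ∀ i ω, ¬ P i ω → 1 ≤ g i ω) :
    1 - ∑ i, outcomeExp p δ (g i) ≤ outcomeExp p δ fun ω => if ∀ i, P i ω then 1 else 0 := by
  have hunion (ω : ι → Fin 3) : 1 - ∑ i, g i ω ≤ if ∀ i, P i ω then 1 else 0 := by
    split_ifs with h
    · linarith [sum_nonneg fun i (_ : i ∈ univ) => hg i ω]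
    · obtain ⟨i, hi⟩ := not_forall.1 h
      linarith [hP i ω hi, single_le_sum (fun i _ => hg i ω) (mem_univ i)]
  calc 1 - ∑ i, outcomeExp p δ (g i)
      = outcomeExp p δ fun ω => 1 - ∑ i, g i ω := by
        rw [outcomeExp_sub, outcomeExp_one, outcomeExp_sum]
    _ ≤ _ := outcomeExp_mono hp0 hp1 hδ hunion

lemma sum_pWeight_mul_exp_le (p δ t : ℝ) :
    ∑ b, pWeight p δ b * Real.exp (-(t * sgn3 b)) ≤
      Real.exp (p * (Real.cosh t - 1 - δ * Real.sinh t)) := by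
  calc ∑ b, pWeight p δ b * Real.exp (-(t * sgn3 b))
      = p * (Real.cosh t - 1 - δ * Real.sinh t) + 1 := by
        simp only [pWeight, sgn3, Fin.sum_univ_three, Matrix.cons_val, mul_zero, mul_one, mul_neg,
          neg_neg, Real.exp_zero, neg_zero]
        rw [Real.cosh_eq, Real.sinh_eq]
        ring
    _ ≤ Real.exp (p * (Real.cosh t - 1 - δ * Real.sinh t)) := Real.add_one_le_exp _

lemma outcomeExp_exp_neg_sum_le (hp0 : 0 ≤ p) (hp1 : p ≤ 1) (hδ : |δ| ≤ 1) (S : Finset ι)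
    (a : ι → ℝ) :
    outcomeExp p δ (fun ω => Real.exp (-∑ α ∈ S, a α * sgn3 (ω α))) ≤
      Real.exp (p * ∑ α ∈ S, (Real.cosh (a α) - 1 - δ * Real.sinh (a α))) := by
  simp_rw [← sum_neg_distrib, mul_sum, Real.exp_sum]
  rw [outcomeExp_prod S fun α b => Real.exp (-(a α * sgn3 b))]
  exact prod_le_prod (fun α _ => sum_nonneg fun b _ =>
    mul_nonneg (pWeight_nonneg hp0 hp1 hδ b) (Real.exp_pos _).le)
    fun α _ => sum_pWeight_mul_exp_le p δ (a α)

lemma outcomeExp_exp_neg_sign_sum_le (hp0 : 0 ≤ p) (hp1 : p ≤ 1) (hδ0 : 0 ≤ δ) (hδ1 : δ ≤ 1)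
    {S : Finset ι} {c : ι → ℝ} (hc : ∀ α ∈ S, |c α| = 1) (hmean : (#S : ℝ) / 2 ≤ ∑ α ∈ S, c α) :
    outcomeExp p δ (fun ω => Real.exp (-(δ / 4 * ∑ α ∈ S, c α * sgn3 (ω α)))) ≤
      Real.exp (-(p * #S * δ ^ 2 / 16)) := by
  have hcosh : Real.cosh (δ / 4) - 1 ≤ (δ / 4) ^ 2 :=
    cosh_sub_one_le_sq (by rw [abs_of_nonneg (by positivity)]; linarith)
  have hsinh : δ / 4 ≤ Real.sinh (δ / 4) := Real.self_le_sinh_iff.2 (by positivity)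
  have hexponent : ∑ α ∈ S, (Real.cosh (δ / 4 * c α) - 1 - δ * Real.sinh (δ / 4 * c α)) ≤
      -(#S * δ ^ 2 / 16) := by
    calc ∑ α ∈ S, (Real.cosh (δ / 4 * c α) - 1 - δ * Real.sinh (δ / 4 * c α))
        = ∑ α ∈ S, (Real.cosh (δ / 4) - 1 - δ * Real.sinh (δ / 4) * c α) := by
          refine sum_congr rfl fun α hα => ?_
          rw [cosh_mul_of_abs_eq_one (hc α hα), sinh_mul_of_abs_eq_one (hc α hα)]
          ring
      _ = #S * (Real.cosh (δ / 4) - 1) - δ * Real.sinh (δ / 4) * ∑ α ∈ S, c α := by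
          rw [sum_sub_distrib, sum_const, nsmul_eq_mul, mul_sum]
      _ ≤ #S * (δ / 4) ^ 2 - δ * (δ / 4) * (#S / 2) := by gcongr
      _ = -(#S * δ ^ 2 / 16) := by ring
  have hmoment := outcomeExp_exp_neg_sum_le hp0 hp1 (abs_le.2 ⟨by linarith, hδ1⟩) S
    fun α => δ / 4 * c α
  simp only [mul_assoc (δ / 4), ← mul_sum] at hmoment
  refine hmoment.trans (Real.exp_le_exp.2 ?_)
  linarith [mul_le_mul_of_nonneg_left hexponent hp0]

end OutcomeExp

section Counting

variable {n k : ℕ}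

lemma card_kset_superset (s : Finset (Fin n)) (hs : #s ≤ k) :
    #{α : KSet n k | s ⊆ α.1} = (n - #s).choose (k - #s) := by
  have hmap : (univ.filter fun α : KSet n k => s ⊆ α.1).map (Function.Embedding.subtype _) =
      {t ∈ powersetCard k (univ : Finset (Fin n)) | s ⊆ t} := by
    ext t
    simp [mem_powersetCard, and_comm]
  rw [← card_map, hmap, card_filter_powersetCard_subset s univ k (subset_univ s) hs, card_univ,
    Fintype.card_fin]

/-- The constraints through `i`, that is, those voting on the coordinate `i`. -/
def constraintsAt (k : ℕ) (i : Fin n) : Finset (KSet n k) := {α | i ∈ α.1}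

lemma mem_constraintsAt {i : Fin n} {α : KSet n k} : α ∈ constraintsAt k i ↔ i ∈ α.1 := by
  simp only [constraintsAt, mem_filter, mem_univ, true_and]

lemma card_constraintsAt_succ (k : ℕ) (i : Fin n) :
    #(constraintsAt (k + 1) i) = (n - 1).choose k := by
  simpa [constraintsAt] using card_kset_superset (k := k + 1) {i} (by simp)

lemma mul_card_constraintsAt (k : ℕ) (i : Fin n) :
    n * #(constraintsAt k i) = k * n.choose k := by
  obtain ⟨n, rfl⟩ : ∃ m, n = m + 1 := ⟨n - 1, by have := i.pos; omega⟩
  cases k with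
  | zero => simp [constraintsAt, filter_eq_empty_iff]
  | succ k =>
    rw [card_constraintsAt_succ, Nat.add_sub_cancel, Nat.add_one_mul_choose_eq, mul_comm]

lemma mul_card_constraintsAt_mem_le {i j : Fin n} (hij : i ≠ j) :
    n * #{α ∈ constraintsAt k i | j ∈ α.1} ≤ k * #(constraintsAt k i) := by
  have hle : #{α ∈ constraintsAt k i | j ∈ α.1} ≤ #(constraintsAt k i) := card_filter_le _ _
  have hpair : #({i, j} : Finset (Fin n)) = 2 := card_pair hij
  have hfilter : (constraintsAt k i).filter (fun α => j ∈ α.1) =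
      univ.filter fun α : KSet n k => {i, j} ⊆ α.1 := by
    ext α
    simp [constraintsAt, insert_subset_iff]
  rcases lt_or_ge k 2 with hk | hk
  · have hempty : (univ.filter fun α : KSet n k => {i, j} ⊆ α.1) = ∅ :=
      filter_eq_empty_iff.2 fun α _ hα => by
        have := card_le_card hα
        rw [hpair, α.2] at this
        omega
    simp [hfilter, hempty]
  · obtain ⟨k, rfl⟩ := Nat.exists_eq_add_of_le' hk
    obtain ⟨n, rfl⟩ : ∃ m, n = m + 2 := Nat.exists_eq_add_of_le' (by
      have := card_le_univ ({i, j} : Finset (Fin n))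
      rwa [hpair, Fintype.card_fin] at this)
    have hcount := card_kset_superset (k := k + 2) {i, j} (by omega)
    rw [hpair, Nat.add_sub_cancel, Nat.add_sub_cancel, ← hfilter] at hcount
    have hrec := Nat.add_one_mul_choose_eq n k
    have hcard : #(constraintsAt (k + 2) i) = (n + 1).choose (k + 1) :=
      card_constraintsAt_succ (k + 1) i
    rw [← hcard, ← hcount] at hrec
    -- the recursion `(n + 1) P = S (k + 1)` and `P ≤ S` add up to `(n + 2) P ≤ (k + 2) S`
    linarith

lemma mul_sum_sum_erase_le (k : ℕ) (i : Fin n) {f : Fin n → ℝ} (hf : ∀ j, 0 ≤ f j) :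
    n * ∑ α ∈ constraintsAt k i, ∑ j ∈ α.1.erase i, f j ≤
      k * #(constraintsAt k i) * ∑ j, f j := by
  calc (n : ℝ) * ∑ α ∈ constraintsAt k i, ∑ j ∈ α.1.erase i, f j
      = n * ∑ j ∈ univ.erase i, ∑ α ∈ constraintsAt k i with j ∈ α.1, f j := by
        congr 1
        refine sum_comm' fun α j => ?_
        simp only [mem_filter, mem_erase, mem_univ, and_true]
        tauto
    _ = ∑ j ∈ univ.erase i, ((n * #{α ∈ constraintsAt k i | j ∈ α.1} : ℕ) : ℝ) * f j := by
        simp only [sum_const, nsmul_eq_mul, mul_sum, Nat.cast_mul, mul_assoc]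
    _ ≤ ∑ j ∈ univ.erase i, ((k * #(constraintsAt k i) : ℕ) : ℝ) * f j := by
        refine sum_le_sum fun j hj => mul_le_mul_of_nonneg_right (Nat.cast_le.2 ?_) (hf j)
        exact mul_card_constraintsAt_mem_le (ne_of_mem_erase hj).symm
    _ ≤ ∑ j, ((k * #(constraintsAt k i) : ℕ) : ℝ) * f j :=
        sum_le_sum_of_subset_of_nonneg (subset_univ _) fun j _ _ =>
          mul_nonneg (Nat.cast_nonneg _) (hf j)
    _ = k * #(constraintsAt k i) * ∑ j, f j := by rw [← mul_sum, Nat.cast_mul]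

end Counting

section Vote

variable {n k : ℕ} {x xh : Fin n → ℝ}

/-- The sign `∏_{j ∈ e∖{i}} x_j x̂_j` with which the outcome sign of the constraint `e = α` enters
`x_i T_i`: it is `1` exactly when the constraint, if noiseless, votes correctly on `i`. -/
noncomputable def voteSign (x xh : Fin n → ℝ) (i : Fin n) (α : KSet n k) : ℝ :=
  ∏ j ∈ α.1.erase i, x j * xh j

lemma abs_voteSign (hx : ∀ j, |x j| = 1) (hxh : ∀ j, |xh j| = 1) (i : Fin n) (α : KSet n k) :
    |voteSign x xh i α| = 1 := by
  simp [voteSign, abs_prod, abs_mul, hx, hxh]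

lemma mul_Tclean {i : Fin n} (hx : |x i| = 1) (xh : Fin n → ℝ) (ω : KSet n k → Fin 3) :
    x i * Tclean n k x xh ω i = ∑ α ∈ constraintsAt k i, voteSign x xh i α * sgn3 (ω α) := by
  have hsq : x i * x i = 1 := by rw [← abs_mul_abs_self, hx, one_mul]
  rw [Tclean, ← sum_filter, mul_sum]
  refine sum_congr rfl fun α hα => ?_
  rw [← mul_prod_erase α.1 x (mem_constraintsAt.1 hα), voteSign, prod_mul_distrib]
  linear_combination (sgn3 (ω α) * (∏ j ∈ α.1.erase i, x j) * ∏ j ∈ α.1.erase i, xh j) * hsq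

lemma half_card_constraintsAt_le_sum_voteSign (hx : ∀ j, |x j| ≤ 1) (hxh : ∀ j, |xh j| ≤ 1)
    (hdist : k * ∑ j, (1 - x j * xh j) ≤ n / 2) (i : Fin n) :
    (#(constraintsAt k i) : ℝ) / 2 ≤ ∑ α ∈ constraintsAt k i, voteSign x xh i α := by
  have hn : (0 : ℝ) < n := by exact_mod_cast i.pos
  have hagree (j : Fin n) : |x j * xh j| ≤ 1 := by
    rw [abs_mul]
    exact mul_le_one₀ (hx j) (abs_nonneg _) (hxh j)
  have hloss : ∑ α ∈ constraintsAt k i, ∑ j ∈ α.1.erase i, (1 - x j * xh j) ≤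
      (#(constraintsAt k i) : ℝ) / 2 := by
    refine le_of_mul_le_mul_left ?_ hn
    calc (n : ℝ) * ∑ α ∈ constraintsAt k i, ∑ j ∈ α.1.erase i, (1 - x j * xh j)
        ≤ k * #(constraintsAt k i) * ∑ j, (1 - x j * xh j) :=
          mul_sum_sum_erase_le k i fun j => sub_nonneg.2 (le_of_abs_le (hagree j))
      _ = #(constraintsAt k i) * (k * ∑ j, (1 - x j * xh j)) := by ring
      _ ≤ #(constraintsAt k i) * (n / 2) := by gcongr
      _ = n * (#(constraintsAt k i) / 2) := by ring
  calc (#(constraintsAt k i) : ℝ) / 2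
      ≤ #(constraintsAt k i) -
          ∑ α ∈ constraintsAt k i, ∑ j ∈ α.1.erase i, (1 - x j * xh j) := by linarith
    _ = ∑ α ∈ constraintsAt k i, (1 - ∑ j ∈ α.1.erase i, (1 - x j * xh j)) := by
        rw [sum_sub_distrib, sum_const, nsmul_eq_mul, mul_one]
    _ ≤ ∑ α ∈ constraintsAt k i, voteSign x xh i α :=
        sum_le_sum fun α _ => one_sub_sum_one_sub_le_prod _ fun j _ => hagree j

lemma outcomeExp_exp_neg_vote_le {p δ : ℝ} (hp0 : 0 ≤ p) (hp1 : p ≤ 1) (hδ0 : 0 ≤ δ) (hδ1 : δ ≤ 1)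
    (hx : ∀ j, |x j| = 1) (hxh : ∀ j, |xh j| = 1)
    (hdist : k * ∑ j, (1 - x j * xh j) ≤ n / 2) (i : Fin n) :
    outcomeExp p δ (fun ω => Real.exp (-(δ / 4 * (x i * Tclean n k x xh ω i)))) ≤
      Real.exp (-(p * n.choose k * k * δ ^ 2 / (16 * n))) := by
  have hn : (n : ℝ) ≠ 0 := by exact_mod_cast i.pos.ne'
  have hcard : (n : ℝ) * #(constraintsAt k i) = k * n.choose k := by
    exact_mod_cast mul_card_constraintsAt k i
  have hexponent : p * n.choose k * k * δ ^ 2 / (16 * n) =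
      p * #(constraintsAt k i) * δ ^ 2 / 16 := by
    field_simp
    linear_combination -(p * δ ^ 2) * hcard
  simp_rw [mul_Tclean (hx i), hexponent]
  exact outcomeExp_exp_neg_sign_sum_le hp0 hp1 hδ0 hδ1 (fun α _ => abs_voteSign hx hxh i α)
    (half_card_constraintsAt_le_sum_voteSign (fun j => (hx j).le) (fun j => (hxh j).le) hdist i)

open Classical in
theorem one_sub_mul_exp_le_outcomeExp_recovery {p δ : ℝ} (hp0 : 0 ≤ p) (hp1 : p ≤ 1)
    (hδ0 : 0 ≤ δ) (hδ1 : δ ≤ 1) (hx : ∀ j, |x j| = 1) (hxh : ∀ j, |xh j| = 1)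
    (hdist : k * ∑ j, (1 - x j * xh j) ≤ n / 2) {sg : ℝ → ℝ}
    (hpos : ∀ t, 0 < t → sg t = 1) (hneg : ∀ t, t < 0 → sg t = -1) :
    1 - n * Real.exp (-(p * n.choose k * k * δ ^ 2 / (16 * n))) ≤
      outcomeExp p δ fun ω : KSet n k → Fin 3 =>
        if ∀ i, sg (Tclean n k x xh ω i) = x i then 1 else 0 := by
  have hwrong (i : Fin n) (ω : KSet n k → Fin 3) (h : sg (Tclean n k x xh ω i) ≠ x i) :
      1 ≤ Real.exp (-(δ / 4 * (x i * Tclean n k x xh ω i))) :=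
    Real.one_le_exp (neg_nonneg.2 (mul_nonpos_of_nonneg_of_nonpos (by positivity)
      (mul_nonpos_of_sign_ne hpos hneg (hx i) h)))
  calc 1 - n * Real.exp (-(p * n.choose k * k * δ ^ 2 / (16 * n)))
      = 1 - ∑ _i : Fin n, Real.exp (-(p * n.choose k * k * δ ^ 2 / (16 * n))) := by
        rw [sum_const, card_univ, Fintype.card_fin, nsmul_eq_mul]
    _ ≤ 1 - ∑ i : Fin n, outcomeExp p δ fun ω : KSet n k → Fin 3 =>
          Real.exp (-(δ / 4 * (x i * Tclean n k x xh ω i))) := by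
        gcongr with i
        exact outcomeExp_exp_neg_vote_le hp0 hp1 hδ0 hδ1 hx hxh hdist i
    _ ≤ _ := one_sub_sum_le_outcomeExp_forall hp0 hp1 (abs_le.2 ⟨by linarith, hδ1⟩)
        (fun _ _ => (Real.exp_pos _).le) hwrong

end Vote

open Classical in
theorem stmt10_general {n k : ℕ} (hn : 0 < n) (hk : 1 ≤ k) {δ ε A : ℝ} (hδ0 : 0 ≤ δ) (hδ1 : δ ≤ 1)
    (hlog : 16 * (A + 1) * Real.log n ≤ δ ^ 2 * (n : ℝ) ^ ε)
    (hm : ⌈(n : ℝ) ^ (1 + ε)⌉₊ ≤ n.choose k) {x xh : Fin n → ℝ}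
    (hx : ∀ i, x i = 1 ∨ x i = -1) (hxh : ∀ i, xh i = 1 ∨ xh i = -1)
    (hdist : (Nat.card {j : Fin n // xh j ≠ x j} : ℝ) ≤ (n : ℝ) / (4 * k)) {sg : ℝ → ℝ}
    (hpos : ∀ t, 0 < t → sg t = 1) (hneg : ∀ t, t < 0 → sg t = -1) :
    1 - (n : ℝ) ^ (-A) ≤
      outcomeExp ((⌈(n : ℝ) ^ (1 + ε)⌉₊ : ℝ) / (n.choose k : ℝ)) δ fun ω : KSet n k → Fin 3 =>
        if ∀ i : Fin n, sg (Tclean n k x xh ω i) = x i then 1 else 0 := by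
  have hn' : (0 : ℝ) < n := by exact_mod_cast hn
  have hk' : (1 : ℝ) ≤ k := by exact_mod_cast hk
  have hchoose : (n.choose k : ℝ) ≠ 0 := by
    exact_mod_cast ((Nat.ceil_pos.2 (by positivity)).trans_le hm).ne'
  have hceil : (n : ℝ) * (n : ℝ) ^ ε ≤ ⌈(n : ℝ) ^ (1 + ε)⌉₊ := by
    calc (n : ℝ) * (n : ℝ) ^ ε = (n : ℝ) ^ (1 + ε) := by rw [Real.rpow_add hn', Real.rpow_one]
      _ ≤ ⌈(n : ℝ) ^ (1 + ε)⌉₊ := Nat.le_ceil _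
  set m : ℝ := (⌈(n : ℝ) ^ (1 + ε)⌉₊ : ℝ)
  have hdist' : k * ∑ j, (1 - x j * xh j) ≤ n / 2 := by
    rw [sum_one_sub_mul_eq_two_mul_card hx hxh]
    rw [le_div_iff₀ (by positivity)] at hdist
    linarith
  have hexponent : (A + 1) * Real.log n ≤
      m / n.choose k * n.choose k * k * δ ^ 2 / (16 * n) := by
    rw [div_mul_cancel₀ _ hchoose, le_div_iff₀ (by positivity)]
    calc (A + 1) * Real.log n * (16 * n) = n * (16 * (A + 1) * Real.log n) := by ring
      _ ≤ n * (δ ^ 2 * (n : ℝ) ^ ε) := by gcongr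
      _ = n * (n : ℝ) ^ ε * 1 * δ ^ 2 := by ring
      _ ≤ m * k * δ ^ 2 := by gcongr
  exact (sub_le_sub_left (mul_exp_neg_le_rpow_neg hn' hexponent) 1).trans
    (one_sub_mul_exp_le_outcomeExp_recovery (by positivity)
      (div_le_one_of_le₀ (Nat.cast_le.2 hm) (Nat.cast_nonneg _)) hδ0 hδ1
      (fun i => (abs_eq zero_le_one).2 (hx i)) (fun i => (abs_eq zero_le_one).2 (hxh i))
      hdist' hpos hneg)

open Classical in
/-- Clean-up lemma: there are constants `C > 0` and `n₀` such that for all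
`n ≥ n₀`, `k ≥ 3`, bias `δ ∈ (0,1]` with `δ² n^{0.1} ≥ C log n`, planted `x ∈ {±1}^n` and
estimate `x̂ ∈ {±1}^n` with at most `n/(4k)` mismatches, a fresh Bernoulli clean-up sample
with `m' = ⌈n^{1.1}⌉` expected constraints, followed by coordinate-wise sign votes, recovers
`x` exactly with probability at least `1 − n^{−10}`. (The inclusion probability is
`p' = m'/binom(n,k)`, and any fixed tie-breaking rule `sg` at `0` is allowed.) -/
theorem stmt10 : ∃ C : ℝ, 0 < C ∧ ∃ n₀ : ℕ, ∀ n k : ℕ, n₀ ≤ n → 3 ≤ k →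
    ∀ δ : ℝ, 0 < δ → δ ≤ 1 → C * Real.log n ≤ δ ^ 2 * (n : ℝ) ^ (0.1 : ℝ) →
    ⌈(n : ℝ) ^ (1.1 : ℝ)⌉₊ ≤ n.choose k →
    ∀ x xh : Fin n → ℝ, (∀ i, x i = 1 ∨ x i = -1) → (∀ i, xh i = 1 ∨ xh i = -1) →
    (Nat.card {j : Fin n // xh j ≠ x j} : ℝ) ≤ (n : ℝ) / (4 * k) →
    ∀ sg : ℝ → ℝ, (∀ t, 0 < t → sg t = 1) → (∀ t, t < 0 → sg t = -1) →
      (sg 0 = 1 ∨ sg 0 = -1) →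
    1 - (n : ℝ) ^ (-(10 : ℝ)) ≤
      ∑ ω : KSet n k → Fin 3,
        (∏ α : KSet n k,
            pWeight ((⌈(n : ℝ) ^ (1.1 : ℝ)⌉₊ : ℝ) / (n.choose k : ℝ)) δ (ω α)) *
          (if ∀ i : Fin n, sg (Tclean n k x xh ω i) = x i then 1 else 0) := by
  refine ⟨16 * (10 + 1), by norm_num, 1, ?_⟩
  intro n k hn hk δ hδ0 hδ1 hC hm x xh hx hxh hB sg hpos hneg _
  rw [show (1.1 : ℝ) = 1 + 0.1 by norm_num] at hm ⊢
  exact stmt10_general hn (by omega) hδ0.le hδ1 hC hm hx hxh hB hpos hneg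
end

section
/- Fix k ≥ 3. Then for every n ≥ 1 and every integer t with 1 ≤ t ≤ n/k, the number N_t of simple even k-uniform hypergraphs on [n] with exactly t edges satisfies N_t ≤ ( e^{k/2+2} · (k^{(k+1)/2} / k!) · n^{k/2} · t^{k/2−1} )^t. -/
open Finset

/-- `N_t`: the number of simple even `k`-uniform hypergraphs on `[n]` with exactly `t`
edges, i.e. sets of `t` distinct `k`-subsets of `[n]` in which every vertex lies in an even
number of members. -/
noncomputable def Ncount (n k t : ℕ) : ℕ :=
  Nat.card {S : Finset (Finset (Fin n)) //
    (∀ α ∈ S, α.card = k) ∧ S.card = t ∧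
    ∀ i : Fin n, Even ((S.filter (fun α => i ∈ α)).card)}

/-- The constant `C_k = e^{k/2+2} k^{(k+1)/2} / k!`. -/
noncomputable def Ck (k : ℕ) : ℝ :=
  Real.exp ((k : ℝ) / 2 + 2) * (k : ℝ) ^ (((k : ℝ) + 1) / 2) / (k.factorial : ℝ)

/-!
Writing down the edges of an even `k`-uniform hypergraph with `t` edges one after the other, in any
of the `t! (k!)^t` possible orders, gives a word of length `tk` over `[n]` in which every letter
occurs an even number of times, and the word determines both the hypergraph and the orders. So
`N_t · t! (k!)^t` is at most the number of even words of length `L = tk`.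

In an even word the letter at a fixed position occurs a second time. There are at most `L - 1`
choices for the other position and `n` for the letter, and deleting both positions leaves an even
word of length `L - 2`; by induction there are at most `(L n)^(L/2)` even words. Together with
`t! ≥ (t/e)^t` this bounds `N_t`, even with the smaller constant `e k^(k/2) / k!`.
-/

/-- The words `w : ι → β`, with positions `ι` and letters `β`, in which every letter occurs an
even number of times. Listing all the edges of an even hypergraph vertex by vertex produces such
a word. -/
def evenWords (ι β : Type*) [Fintype ι] [DecidableEq ι] [Fintype β] [DecidableEq β] :
    Finset (ι → β) :=
  {w | ∀ b, Even (#{i | w i = b})}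

lemma card_filter_restrict {ι β : Type*} [Fintype ι] [DecidableEq ι] [DecidableEq β]
    (s : Finset ι) (w : ι → β) (b : β) :
    #{x : {x // x ∉ s} | w x = b} = #(({x | w x = b} : Finset ι) \ s) := by
  rw [sdiff_eq_filter, ← card_subtype (· ∉ s)]
  refine congrArg card (Finset.ext fun x => ?_)
  simp only [mem_filter, mem_univ, true_and, mem_subtype]

section EvenWords

variable {ι β : Type*} [Fintype ι] [DecidableEq ι] [Fintype β] [DecidableEq β]

lemma mem_evenWords {w : ι → β} : w ∈ evenWords ι β ↔ ∀ b, Even (#{i | w i = b}) := by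
  simp only [evenWords, mem_filter, mem_univ, true_and]

lemma exists_ne_apply_eq_of_mem_evenWords {w : ι → β} (hw : w ∈ evenWords ι β) (i : ι) :
    ∃ j ≠ i, w j = w i := by
  have hmem : i ∈ ({x | w x = w i} : Finset ι) := by simp
  have hone_lt : 1 < #{x | w x = w i} := by
    have hpos := card_pos.2 ⟨i, hmem⟩
    have heven := mem_evenWords.1 hw (w i)
    grind
  obtain ⟨j, hj, hne⟩ := exists_mem_ne hone_lt i
  exact ⟨j, hne, (mem_filter.1 hj).2⟩

lemma restrict_mem_evenWords {w : ι → β} (hw : w ∈ evenWords ι β) {s : Finset ι}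
    (hs : Even #s) {a : β} (hconst : ∀ x ∈ s, w x = a) :
    (fun x : {x // x ∉ s} => w x) ∈ evenWords {x // x ∉ s} β := by
  refine mem_evenWords.2 fun b => ?_
  rw [card_filter_restrict]
  have hb := mem_evenWords.1 hw b
  by_cases hab : a = b
  · have hsub : s ⊆ ({x | w x = b} : Finset ι) := fun x hx => by simp [hconst x hx, hab]
    rw [card_sdiff_of_subset hsub]
    exact hb.tsub hs
  · have hdisj : Disjoint ({x | w x = b} : Finset ι) s :=
      disjoint_left.2 fun x hx hxs => hab ((hconst x hxs).symm.trans (mem_filter.1 hx).2)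
    rwa [sdiff_eq_self_of_disjoint hdisj]

lemma card_filter_evenWords_le {i j : ι} (hij : i ≠ j) :
    #{w ∈ evenWords ι β | w j = w i} ≤
      Fintype.card β * #(evenWords {x // x ∉ ({i, j} : Finset ι)} β) := by
  rw [← card_univ (α := β), ← card_product]
  refine card_le_card_of_injOn (fun w => (w i, fun x => w x)) ?_ ?_
  · intro w hw
    obtain ⟨hw, hji⟩ := mem_filter.1 hw
    refine mem_product.2 ⟨mem_univ _, restrict_mem_evenWords hw ?_ (a := w i) ?_⟩
    · simp [card_pair hij]
    · simp [hji]
  · intro w hw w' hw' h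
    have hji := (mem_filter.1 hw).2
    have hji' := (mem_filter.1 hw').2
    obtain ⟨hi, hrest⟩ := Prod.mk.inj h
    funext x
    by_cases hx : x ∈ ({i, j} : Finset ι)
    · rw [mem_insert, mem_singleton] at hx
      obtain rfl | rfl := hx
      · exact hi
      · exact hji.trans (hi.trans hji'.symm)
    · exact congrFun hrest ⟨x, hx⟩

lemma card_evenWords_le_sum (i : ι) :
    #(evenWords ι β) ≤ ∑ j ∈ univ.erase i,
      Fintype.card β * #(evenWords {x // x ∉ ({i, j} : Finset ι)} β) := by
  have hcover : evenWords ι β ⊆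
      (univ.erase i).biUnion fun j => {w ∈ evenWords ι β | w j = w i} := fun w hw => by
    obtain ⟨j, hne, hj⟩ := exists_ne_apply_eq_of_mem_evenWords hw i
    exact mem_biUnion.2 ⟨j, mem_erase.2 ⟨hne, mem_univ j⟩, mem_filter.2 ⟨hw, hj⟩⟩
  exact (card_le_card hcover).trans <| card_biUnion_le.trans <|
    sum_le_sum fun j hj => card_filter_evenWords_le (ne_of_mem_erase hj).symm

end EvenWords

theorem card_evenWords_le (ι β : Type*) [Fintype ι] [DecidableEq ι] [Fintype β] [DecidableEq β] :
    (#(evenWords ι β) : ℝ) ≤ √(Fintype.card ι * Fintype.card β) ^ Fintype.card ι := by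
  induction hL : Fintype.card ι using Nat.twoStepInduction generalizing ι with
  | zero =>
    have := Fintype.card_eq_zero_iff.1 hL
    simpa using card_le_one_of_subsingleton (evenWords ι β)
  | one =>
    obtain ⟨i, hi⟩ := Fintype.card_eq_one_iff.1 hL
    have hempty : evenWords ι β = ∅ := eq_empty_of_forall_notMem fun w hw => by
      obtain ⟨j, hne, -⟩ := exists_ne_apply_eq_of_mem_evenWords hw i
      exact hne (hi j)
    simp [hempty]
  | more L ih _ =>
    obtain ⟨i⟩ : Nonempty ι := Fintype.card_pos_iff.1 (by lia)
    set q := Fintype.card β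
    have hdelete : ∀ j ∈ univ.erase i,
        (#(evenWords {x // x ∉ ({i, j} : Finset ι)} β) : ℝ) ≤ √(L * q) ^ L := fun j hj => by
      refine ih _ ?_
      rw [Fintype.card_subtype_compl, Fintype.card_coe, hL, card_pair (ne_of_mem_erase hj).symm,
        Nat.add_sub_cancel]
    calc (#(evenWords ι β) : ℝ)
        ≤ ∑ j ∈ univ.erase i, q * (#(evenWords {x // x ∉ ({i, j} : Finset ι)} β) : ℝ) := by
          exact_mod_cast card_evenWords_le_sum (β := β) i
      _ ≤ ∑ _j ∈ univ.erase i, q * √(L * q) ^ L := by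
          gcongr with j hj
          exact hdelete j hj
      _ = (L + 1) * q * √(L * q) ^ L := by
          simp [card_erase_of_mem, hL, mul_assoc]
      _ ≤ (L + 2) * q * √((L + 2) * q) ^ L := by
          gcongr <;> linarith
      _ = √((L + 2 : ℕ) * q) ^ (L + 2) := by
          rw [pow_add, Real.sq_sqrt (by positivity), mul_comm]
          push_cast
          rfl

/-- An ordering of the edges of the hypergraph `H` by `ι` together with an ordering of the
vertices of each edge by `κ`. It exists only if `H` is `κ`-uniform with `ι` many edges. -/
def Listing {V : Type*} (ι κ : Type*) (H : Finset (Finset V)) : Type _ :=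
  (ι ≃ H) × ∀ α : H, κ ≃ (α : Finset V)

namespace Listing

variable {ι κ V : Type*} {H H' : Finset (Finset V)}

/-- The word `v₁₁ … v₁ₖ v₂₁ … v₂ₖ …` obtained by writing down the edges one after the other. -/
def word (l : Listing ι κ H) : ι × κ → V :=
  fun x => l.2 (l.1 x.1) x.2

lemma range_word_mk (l : Listing ι κ H) (i : ι) :
    Set.range (fun j => l.word (i, j)) = (l.1 i : Finset V) :=
  ((l.2 (l.1 i)).surjective.range_comp Subtype.val).trans Subtype.range_coe

lemma mem_iff_exists_range_word_mk (l : Listing ι κ H) {α : Finset V} :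
    α ∈ H ↔ ∃ i, Set.range (fun j => l.word (i, j)) = α := by
  simp only [range_word_mk, coe_inj]
  exact ⟨fun hα => ⟨l.1.symm ⟨α, hα⟩, by simp⟩, fun ⟨i, hi⟩ => hi ▸ (l.1 i).2⟩

lemma eq_of_word_eq {l : Listing ι κ H} {l' : Listing ι κ H'} (h : l.word = l'.word) :
    H = H' := by
  ext α
  rw [l.mem_iff_exists_range_word_mk, l'.mem_iff_exists_range_word_mk, h]

lemma word_injective : Function.Injective (word : Listing ι κ H → ι × κ → V) := by
  intro l l' h
  have hedges : l.1 = l'.1 := Equiv.ext fun i => Subtype.ext <| coe_injective <| by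
    rw [← range_word_mk, ← range_word_mk, h]
  obtain ⟨e, f⟩ := l
  obtain ⟨e', f'⟩ := l'
  obtain rfl : e = e' := hedges
  refine Prod.ext rfl (funext fun α => Equiv.ext fun j => Subtype.ext ?_)
  obtain ⟨i, rfl⟩ := e.surjective α
  exact congrFun h (i, j)

variable [Fintype ι] [Fintype κ] [DecidableEq V]

lemma card_filter_word_eq (l : Listing ι κ H) (v : V) :
    #{x | l.word x = v} = #{α ∈ H | v ∈ α} :=
  calc #{x | l.word x = v}
      = ∑ i, ∑ j, if (l.2 (l.1 i) j : V) = v then 1 else 0 := by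
        rw [card_filter, Fintype.sum_prod_type]
        rfl
    _ = ∑ α : H, ∑ j, if (l.2 α j : V) = v then 1 else 0 :=
        l.1.sum_comp fun α : H => ∑ j, if (l.2 α j : V) = v then 1 else 0
    _ = ∑ α : H, ∑ u : (α : Finset V), if (u : V) = v then 1 else 0 :=
        sum_congr rfl fun α _ => (l.2 α).sum_comp fun u => if (u : V) = v then 1 else 0
    _ = ∑ α ∈ H, ∑ u ∈ α, if u = v then 1 else 0 := by
        simp_rw [sum_coe_sort _ fun u : V => if u = v then 1 else 0]
        exact sum_coe_sort H fun α => ∑ u ∈ α, if u = v then 1 else 0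
    _ = #{α ∈ H | v ∈ α} := by
        simp only [sum_ite_eq', card_filter]

lemma word_mem_evenWords [Fintype V] [DecidableEq ι] [DecidableEq κ] (l : Listing ι κ H)
    (heven : ∀ v, Even #{α ∈ H | v ∈ α}) : l.word ∈ evenWords (ι × κ) V :=
  mem_evenWords.2 fun v => l.card_filter_word_eq v ▸ heven v

noncomputable instance [DecidableEq ι] [DecidableEq κ] : Fintype (Listing ι κ H) :=
  inferInstanceAs (Fintype ((ι ≃ H) × ∀ α : H, κ ≃ (α : Finset V)))

lemma card_eq [DecidableEq ι] [DecidableEq κ] (hcard : #H = Fintype.card ι)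
    (hunif : ∀ α ∈ H, #α = Fintype.card κ) :
    Fintype.card (Listing ι κ H) =
      (Fintype.card ι).factorial * (Fintype.card κ).factorial ^ Fintype.card ι := by
  have hedges : Fintype.card (ι ≃ H) = (Fintype.card ι).factorial :=
    Fintype.card_equiv (Fintype.equivOfCardEq (by rw [Fintype.card_coe, hcard]))
  have hvertices (α : H) : Fintype.card (κ ≃ (α : Finset V)) = (Fintype.card κ).factorial :=
    Fintype.card_equiv (Fintype.equivOfCardEq (by rw [Fintype.card_coe, hunif α α.2]))
  calc Fintype.card (Listing ι κ H)
      = Fintype.card (ι ≃ H) * ∏ α : H, Fintype.card (κ ≃ (α : Finset V)) :=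
        (Fintype.card_prod _ _).trans (congrArg _ Fintype.card_pi)
    _ = _ := by
        simp only [hedges, hvertices, prod_const, card_univ, Fintype.card_coe, hcard]

end Listing

theorem card_mul_factorial_le_card_evenWords {V ι κ : Type*} [Fintype V] [DecidableEq V]
    [Fintype ι] [DecidableEq ι] [Fintype κ] [DecidableEq κ] {𝓗 : Finset (Finset (Finset V))}
    (hcard : ∀ H ∈ 𝓗, #H = Fintype.card ι) (hunif : ∀ H ∈ 𝓗, ∀ α ∈ H, #α = Fintype.card κ)
    (heven : ∀ H ∈ 𝓗, ∀ v, Even #{α ∈ H | v ∈ α}) :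
    #𝓗 * ((Fintype.card ι).factorial * (Fintype.card κ).factorial ^ Fintype.card ι) ≤
      #(evenWords (ι × κ) V) := by
  have hinj : Function.Injective fun p : Σ H : 𝓗, Listing ι κ (H : Finset (Finset V)) =>
      p.2.word := by
    rintro ⟨⟨H, hH⟩, l⟩ ⟨⟨H', hH'⟩, l'⟩ h
    obtain rfl : H = H' := Listing.eq_of_word_eq h
    obtain rfl : l = l' := Listing.word_injective h
    rfl
  calc #𝓗 * ((Fintype.card ι).factorial * (Fintype.card κ).factorial ^ Fintype.card ι)
      = ∑ H : 𝓗, Fintype.card (Listing ι κ (H : Finset (Finset V))) := by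
        simp only [Listing.card_eq (hcard _ (Subtype.prop _)) (hunif _ (Subtype.prop _)),
          sum_const, card_univ, Fintype.card_coe, smul_eq_mul]
    _ = Fintype.card (Σ H : 𝓗, Listing ι κ (H : Finset (Finset V))) := Fintype.card_sigma.symm
    _ ≤ #(evenWords (ι × κ) V) :=
        card_le_card_of_injOn (fun p => p.2.word)
          (fun p _ => p.2.word_mem_evenWords (heven _ p.1.2)) hinj.injOn

theorem Ncount_mul_factorial_le (n k t : ℕ) :
    (Ncount n k t : ℝ) * (t.factorial * k.factorial ^ t) ≤ √(t * k * n) ^ (t * k) := by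
  have hcount : Ncount n k t * (t.factorial * k.factorial ^ t) ≤
      #(evenWords (Fin t × Fin k) (Fin n)) := by
    rw [Ncount, Nat.card_eq_fintype_card, Fintype.card_subtype]
    simpa only [Fintype.card_fin] using
      card_mul_factorial_le_card_evenWords (V := Fin n) (ι := Fin t) (κ := Fin k)
        (𝓗 := {S | (∀ α ∈ S, #α = k) ∧ #S = t ∧ ∀ i, Even #{α ∈ S | i ∈ α}})
        (by simp +contextual) (by simp +contextual) (by simp +contextual)
  calc (Ncount n k t : ℝ) * (t.factorial * k.factorial ^ t)
      ≤ #(evenWords (Fin t × Fin k) (Fin n)) := by exact_mod_cast hcount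
    _ ≤ √(t * k * n) ^ (t * k) := by
      simpa using card_evenWords_le (Fin t × Fin k) (Fin n)

lemma natCast_pow_self_le_factorial_mul_exp_one_pow (t : ℕ) :
    (t : ℝ) ^ t ≤ t.factorial * Real.exp 1 ^ t := by
  have h := Real.pow_div_factorial_le_exp (t : ℝ) t.cast_nonneg t
  rwa [div_le_iff₀' (by positivity), ← mul_one (t : ℝ), Real.exp_nat_mul, mul_one] at h

theorem stmt14_general (k n : ℕ) {t : ℕ} (ht : 1 ≤ t) :
    (Ncount n k t : ℝ)
      ≤ (Real.exp 1 * ((k : ℝ) ^ ((k : ℝ) / 2) / (k.factorial : ℝ))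
          * (n : ℝ) ^ ((k : ℝ) / 2) * (t : ℝ) ^ ((k : ℝ) / 2 - 1)) ^ t := by
  have ht0 : (0 : ℝ) < t := by exact_mod_cast ht
  have hsqrt : √(t * k * n) ^ k =
      (t : ℝ) ^ ((k : ℝ) / 2) * (k : ℝ) ^ ((k : ℝ) / 2) * (n : ℝ) ^ ((k : ℝ) / 2) := by
    rw [← Real.rpow_natCast, ← Real.rpow_div_two_eq_sqrt _ (by positivity),
      Real.mul_rpow (by positivity) (by positivity), Real.mul_rpow (by positivity) (by positivity)]
  have hmul : (Ncount n k t : ℝ) * (t * k.factorial) ^ t ≤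
      (Real.exp 1 * √(t * k * n) ^ k) ^ t :=
    calc (Ncount n k t : ℝ) * (t * k.factorial) ^ t
        = t ^ t * (Ncount n k t * k.factorial ^ t) := by ring
      _ ≤ t.factorial * Real.exp 1 ^ t * (Ncount n k t * k.factorial ^ t) := by
          gcongr
          exact natCast_pow_self_le_factorial_mul_exp_one_pow t
      _ = Real.exp 1 ^ t * (Ncount n k t * (t.factorial * k.factorial ^ t)) := by ring
      _ ≤ Real.exp 1 ^ t * √(t * k * n) ^ (t * k) := by
          gcongr
          exact Ncount_mul_factorial_le n k t
      _ = (Real.exp 1 * √(t * k * n) ^ k) ^ t := by rw [mul_pow, mul_comm t k, pow_mul]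
  calc (Ncount n k t : ℝ)
      ≤ (Real.exp 1 * √(t * k * n) ^ k / (t * k.factorial)) ^ t := by
        rwa [div_pow, le_div_iff₀ (by positivity)]
    _ = _ := by
        rw [hsqrt, Real.rpow_sub_one ht0.ne']
        field_simp

/-- Counting bound for even hypergraphs: for `k ≥ 3` and `1 ≤ t ≤ n/k`,
`N_t ≤ (e^{k/2+2}·(k^{(k+1)/2}/k!)·n^{k/2}·t^{k/2−1})^t`. -/
theorem stmt14 (k : ℕ) (hk : 3 ≤ k) (n t : ℕ) (hn : 1 ≤ n) (ht : 1 ≤ t)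
    (htn : (t : ℝ) ≤ (n : ℝ) / (k : ℝ)) :
    (Ncount n k t : ℝ)
      ≤ (Real.exp ((k : ℝ) / 2 + 2) * ((k : ℝ) ^ (((k : ℝ) + 1) / 2) / (k.factorial : ℝ))
          * (n : ℝ) ^ ((k : ℝ) / 2) * (t : ℝ) ^ ((k : ℝ) / 2 - 1)) ^ t := by
  have hk1 : (1 : ℝ) ≤ k := by exact_mod_cast (by lia : 1 ≤ k)
  exact (stmt14_general k n ht).trans (by gcongr <;> linarith)
end
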